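/- arXiv:1102.5255 — 3 statements merged into one kernel-verified Lean document; each statement's English description precedes it below -/
import Mathlib

section
/- Theorem 2 (determinant formula for the transformed potential): let U₁,…,U_N be as in the context with the chain Y₁ = U₁, Y_k = L_{(k−1)←0}U_k (each Y_k(x) invertible and det W(U₁,…,U_M;U_{M+1},…,U_N) ≠ 0 on the interval considered), and define F₀ = 0 and F_k = F_{k−1} + (∂Y_k)Y_k⁻¹ for k = 1,…,N. Then the entries f^N_{ij} of the matrix F_N satisfy f^N_{ij} = det W_{i,j}(U₁,…,U_M;U_{M+1},…,U_N) / det W(U₁,…,U_M;U_{M+1},…,U_N) for all i, j ∈ {1,…,n}. -/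
open Matrix

noncomputable section

namespace SingularDarboux

variable {n : ℕ}

/-- Entrywise derivative `∂` of a matrix-valued function. -/
def matD (U : ℝ → Matrix (Fin n) (Fin n) ℝ) : ℝ → Matrix (Fin n) (Fin n) ℝ :=
  fun x => Matrix.of fun i j => deriv (fun t => U t i j) x

/-- The operator `D_m` acting on matrix-valued functions: it differentiates the
first `m` rows and keeps the remaining rows unchanged. -/
def matDm (m : ℕ) (U : ℝ → Matrix (Fin n) (Fin n) ℝ) : ℝ → Matrix (Fin n) (Fin n) ℝ :=
  fun x => Matrix.of fun i j => if (i : ℕ) < m then deriv (fun t => U t i j) x else U x i j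

/-- Entrywise derivative `∂` of a vector-valued function. -/
def vecD (Ψ : ℝ → Fin n → ℝ) : ℝ → Fin n → ℝ := fun x i => deriv (fun t => Ψ t i) x

/-- The operator `D_m` (equivalently `∂^{(m)}`) acting on vector-valued functions:
it differentiates the first `m` components and keeps the remaining ones unchanged. -/
def vecDm (m : ℕ) (Ψ : ℝ → Fin n → ℝ) : ℝ → Fin n → ℝ :=
  fun x i => if (i : ℕ) < m then deriv (fun t => Ψ t i) x else Ψ x i

/-- All entries of the matrix-valued function are smooth. -/
def SmoothMat (U : ℝ → Matrix (Fin n) (Fin n) ℝ) : Prop :=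
  ∀ i j, ContDiff ℝ (⊤ : ℕ∞) fun x => U x i j

/-- All components of the vector-valued function are smooth. -/
def SmoothVec (Ψ : ℝ → Fin n → ℝ) : Prop := ∀ i, ContDiff ℝ (⊤ : ℕ∞) fun x => Ψ x i

/-- `U = diag(Ũ, I_{n-m})`: outside of the top-left `m × m` block, `U` coincides with
the identity matrix. -/
def BlockDiag (m : ℕ) (U : ℝ → Matrix (Fin n) (Fin n) ℝ) : Prop :=
  ∀ (x : ℝ) (i j : Fin n), (m ≤ (i : ℕ) ∨ m ≤ (j : ℕ)) → U x i j = if i = j then 1 else 0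

/-- The `(r,k)` block (`r,k` $0$-indexed) of the matrix `W(U₁,…,U_M;U_{M+1},…,U_N)`. -/
def Wblock (m M r k : ℕ) (U : ℝ → Matrix (Fin n) (Fin n) ℝ) : ℝ → Matrix (Fin n) (Fin n) ℝ :=
  if k < M then (if r ≤ k then (matDm m)^[r] U else matD^[r] U)
  else (if r < M then (matDm m)^[r] U else matD^[r - M] ((matDm m)^[M] U))

/-- The `r`-th block of the column appended on the right in `W_j`. -/
def Wcol (m M r : ℕ) (Ψ : ℝ → Fin n → ℝ) : ℝ → Fin n → ℝ :=
  if r < M then (vecDm m)^[r] Ψ else vecD^[r - M] ((vecDm m)^[M] Ψ)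

/-- The `i`-th row of the `k`-th block of the row appended at the bottom in `W_j`
(also the replacement row used in `W_{i,j}`). -/
def Wrow (m M N k : ℕ) (U : ℝ → Matrix (Fin n) (Fin n) ℝ) (i : Fin n) : ℝ → Fin n → ℝ :=
  if k < M then (fun x => matD^[N] U x i) else (fun x => matD^[N - M] ((matDm m)^[M] U) x i)

/-- The `nN × nN` matrix `W(U₁,…,U_M;U_{M+1},…,U_N)`; rows are indexed by pairs
(block-row `r`, row `i` within the block) and similarly for columns. -/
def Wmat (m M N : ℕ) (U : ℕ → ℝ → Matrix (Fin n) (Fin n) ℝ) (x : ℝ) :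
    Matrix (Fin N × Fin n) (Fin N × Fin n) ℝ :=
  Matrix.of fun p q => Wblock m M (p.1 : ℕ) (q.1 : ℕ) (U (q.1 : ℕ)) x p.2 q.2

/-- The `(nN+1) × (nN+1)` matrix `W_j(U₁,…,U_M;U_{M+1},…,U_N,Ψ)`. -/
def WjMat (m M N : ℕ) (j : Fin n) (U : ℕ → ℝ → Matrix (Fin n) (Fin n) ℝ)
    (Ψ : ℝ → Fin n → ℝ) (x : ℝ) :
    Matrix ((Fin N × Fin n) ⊕ Unit) ((Fin N × Fin n) ⊕ Unit) ℝ :=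
  Matrix.of fun p q =>
    match p, q with
    | Sum.inl p, Sum.inl q => Wblock m M (p.1 : ℕ) (q.1 : ℕ) (U (q.1 : ℕ)) x p.2 q.2
    | Sum.inl p, Sum.inr _ => Wcol m M (p.1 : ℕ) Ψ x p.2
    | Sum.inr _, Sum.inl q => Wrow m M N (q.1 : ℕ) (U (q.1 : ℕ)) j x q.2
    | Sum.inr _, Sum.inr _ => vecD^[N - M] ((vecDm m)^[M] Ψ) x j

/-- The `nN × nN` matrix `W_{i,j}(U₁,…,U_M;U_{M+1},…,U_N)`: in the last block-row
(`r = N-1`) of `W` the `j`-th row of each block is replaced as prescribed. -/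
def WijMat (m M N : ℕ) (i j : Fin n) (U : ℕ → ℝ → Matrix (Fin n) (Fin n) ℝ) (x : ℝ) :
    Matrix (Fin N × Fin n) (Fin N × Fin n) ℝ :=
  Matrix.of fun p q =>
    if (p.1 : ℕ) = N - 1 ∧ p.2 = j then Wrow m M N (q.1 : ℕ) (U (q.1 : ℕ)) i x q.2
    else Wblock m M (p.1 : ℕ) (q.1 : ℕ) (U (q.1 : ℕ)) x p.2 q.2


/-- A single Darboux transformation step acting on matrix-valued functions:
`D_m Z - (∂Y)Y⁻¹ Z` if `sing = true` (singular step) and `∂Z - (∂Y)Y⁻¹ Z` otherwise. -/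
def LstepM (m : ℕ) (sing : Bool) (Y Z : ℝ → Matrix (Fin n) (Fin n) ℝ) :
    ℝ → Matrix (Fin n) (Fin n) ℝ :=
  fun x => (if sing then matDm m Z x else matD Z x) - matD Y x * (Y x)⁻¹ * Z x

/-- A single Darboux transformation step acting on vector-valued functions. -/
def LstepV (m : ℕ) (sing : Bool) (Y : ℝ → Matrix (Fin n) (Fin n) ℝ) (Ψ : ℝ → Fin n → ℝ) :
    ℝ → Fin n → ℝ :=
  fun x => (if sing then vecDm m Ψ x else vecD Ψ x) - (matD Y x * (Y x)⁻¹).mulVec (Ψ x)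

/-- `chainM m M U k Z = L_{k←0} Z`, the result of the first `k` transformation steps
applied to the matrix-valued function `Z`; the step of (0-indexed) number `s` is the
singular operator `L^{(m)} = D_m - (∂Y)Y⁻¹` when `s < M` and the regular operator
`∂ - (∂Y)Y⁻¹` otherwise, with transformation matrix `Y_{s+1} = chainM m M U s (U s)`
(so that `Y₁ = U 0`, the 0-indexed `U₁`). -/
def chainM (m M : ℕ) (U : ℕ → ℝ → Matrix (Fin n) (Fin n) ℝ) :
    ℕ → (ℝ → Matrix (Fin n) (Fin n) ℝ) → ℝ → Matrix (Fin n) (Fin n) ℝ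
  | 0, Z => Z
  | s + 1, Z => LstepM m (decide (s < M)) (chainM m M U s (U s)) (chainM m M U s Z)

/-- `chainV m M U k Ψ = L_{k←0} Ψ` for a vector-valued function `Ψ`. -/
def chainV (m M : ℕ) (U : ℕ → ℝ → Matrix (Fin n) (Fin n) ℝ) :
    ℕ → (ℝ → Fin n → ℝ) → ℝ → Fin n → ℝ
  | 0, Ψ => Ψ
  | s + 1, Ψ => LstepV m (decide (s < M)) (chainM m M U s (U s)) (chainV m M U s Ψ)

/-- `F_k`: `F_0 = 0` and `F_k = F_{k-1} + (∂Y_k)Y_k⁻¹` with `Y_k = L_{(k-1)←0} U_k`. -/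
def chainF (m M : ℕ) (U : ℕ → ℝ → Matrix (Fin n) (Fin n) ℝ) :
    ℕ → ℝ → Matrix (Fin n) (Fin n) ℝ
  | 0 => fun _ => 0
  | s + 1 => fun x =>
      chainF m M U s x + matD (chainM m M U s (U s)) x * (chainM m M U s (U s) x)⁻¹

/-- All entries are smooth on `I`. -/
def SmOn (I : Set ℝ) (Z : ℝ → Matrix (Fin n) (Fin n) ℝ) : Prop :=
  ∀ i j, ContDiffOn ℝ (⊤ : ℕ∞) (fun x => Z x i j) I

lemma SmOn.matD {I : Set ℝ} (hI : IsOpen I) {Z : ℝ → Matrix (Fin n) (Fin n) ℝ}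
    (h : SmOn I Z) : SmOn I (matD Z) := by
  intro i j
  have := (h i j).deriv_of_isOpen (m := (⊤ : ℕ∞)) hI (by simp)
  exact this

lemma SmOn.matDm {I : Set ℝ} (hI : IsOpen I) (m : ℕ) {Z : ℝ → Matrix (Fin n) (Fin n) ℝ}
    (h : SmOn I Z) : SmOn I (matDm m Z) := by
  intro i j
  by_cases hi : (i : ℕ) < m
  · have := h.matD hI i j
    simpa [SingularDarboux.matDm, SingularDarboux.matD, hi] using this
  · simpa [SingularDarboux.matDm, hi] using h i j

lemma SmOn.mul {I : Set ℝ} {Y Z : ℝ → Matrix (Fin n) (Fin n) ℝ}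
    (hY : SmOn I Y) (hZ : SmOn I Z) : SmOn I (fun x => Y x * Z x) := by
  intro i j
  simp only [Matrix.mul_apply]
  exact ContDiffOn.sum fun l _ => (hY i l).mul (hZ l j)

lemma SmOn.sub {I : Set ℝ} {Y Z : ℝ → Matrix (Fin n) (Fin n) ℝ}
    (hY : SmOn I Y) (hZ : SmOn I Z) : SmOn I (fun x => Y x - Z x) := by
  intro i j
  exact (hY i j).sub (hZ i j)

lemma SmOn.add {I : Set ℝ} {Y Z : ℝ → Matrix (Fin n) (Fin n) ℝ}
    (hY : SmOn I Y) (hZ : SmOn I Z) : SmOn I (fun x => Y x + Z x) := by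
  intro i j
  exact (hY i j).add (hZ i j)

lemma smOn_det {I : Set ℝ} {Y : ℝ → Matrix (Fin n) (Fin n) ℝ}
    (hY : SmOn I Y) : ContDiffOn ℝ (⊤ : ℕ∞) (fun x => (Y x).det) I := by
  simp only [Matrix.det_apply']
  refine ContDiffOn.sum fun σ _ => contDiffOn_const.mul ?_
  exact contDiffOn_prod fun l _ => hY (σ l) l

lemma SmOn.inv {I : Set ℝ} {Y : ℝ → Matrix (Fin n) (Fin n) ℝ}
    (hY : SmOn I Y) (hd : ∀ x ∈ I, (Y x).det ≠ 0) : SmOn I (fun x => (Y x)⁻¹) := by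
  intro i j
  have h1 : ContDiffOn ℝ (⊤ : ℕ∞) (fun x => ((Y x).det)⁻¹) I := (smOn_det hY).inv hd
  have h2 : ContDiffOn ℝ (⊤ : ℕ∞) (fun x => (Y x).adjugate i j) I := by
    simp only [Matrix.adjugate_apply]
    refine smOn_det (Y := fun x => (Y x).updateRow j (Pi.single i 1)) ?_
    intro k l
    by_cases hk : k = j
    · subst hk
      simp only [Matrix.updateRow_self]
      exact contDiffOn_const
    · simp only [Matrix.updateRow_ne hk]
      exact hY k l
  have := h1.mul h2
  simpa [Matrix.inv_def, Ring.inverse_eq_inv'] using this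

lemma diffAt_of {I : Set ℝ} (hI : IsOpen I) {Z : ℝ → Matrix (Fin n) (Fin n) ℝ}
    (h : SmOn I Z) {x : ℝ} (hx : x ∈ I) (i j : Fin n) :
    DifferentiableAt ℝ (fun t => Z t i j) x :=
  ((h i j).differentiableOn (by simp) x hx).differentiableAt (hI.mem_nhds hx)

lemma matD_congr {I : Set ℝ} (hI : IsOpen I) {Y Z : ℝ → Matrix (Fin n) (Fin n) ℝ}
    {i j : Fin n} (h : ∀ x ∈ I, Y x i j = Z x i j) {x : ℝ} (hx : x ∈ I) :
    matD Y x i j = matD Z x i j := by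
  refine Filter.EventuallyEq.deriv_eq ?_
  filter_upwards [hI.mem_nhds hx] with t ht using h t ht

lemma matD_const {I : Set ℝ} (hI : IsOpen I) {Y : ℝ → Matrix (Fin n) (Fin n) ℝ}
    {i j : Fin n} {c : ℝ} (h : ∀ x ∈ I, Y x i j = c) {x : ℝ} (hx : x ∈ I) :
    matD Y x i j = 0 := by
  have := matD_congr (Z := fun _ => Matrix.of fun _ _ => c) hI h hx
  rw [this]
  simp [matD]

lemma matD_mul {I : Set ℝ} (hI : IsOpen I) {Y Z : ℝ → Matrix (Fin n) (Fin n) ℝ}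
    (hY : SmOn I Y) (hZ : SmOn I Z) {x : ℝ} (hx : x ∈ I) :
    matD (fun t => Y t * Z t) x = matD Y x * Z x + Y x * matD Z x := by
  ext i j
  simp only [matD, Matrix.mul_apply, Matrix.of_apply, Matrix.add_apply]
  rw [deriv_fun_sum (A := fun l t => Y t i l * Z t l j) fun l _ =>
    (diffAt_of hI hY hx i l).mul (diffAt_of hI hZ hx l j),
    ← Finset.sum_add_distrib]
  refine Finset.sum_congr rfl fun l _ => ?_
  rw [deriv_fun_mul (diffAt_of hI hY hx i l) (diffAt_of hI hZ hx l j)]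

lemma matD_sum {I : Set ℝ} (hI : IsOpen I) (s : Finset ℕ)
    {Y : ℕ → ℝ → Matrix (Fin n) (Fin n) ℝ}
    (hY : ∀ r ∈ s, SmOn I (Y r)) {x : ℝ} (hx : x ∈ I) :
    matD (fun t => ∑ r ∈ s, Y r t) x = ∑ r ∈ s, matD (Y r) x := by
  ext i j
  simp only [matD, Matrix.sum_apply, Matrix.of_apply]
  rw [deriv_fun_sum fun r hr => diffAt_of hI (hY r hr) hx i j]

/-- the unperturbed operator of step `s`. -/
def Estep (m M s : ℕ) (Z : ℝ → Matrix (Fin n) (Fin n) ℝ) : ℝ → Matrix (Fin n) (Fin n) ℝ :=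
  if s < M then matDm m Z else matD Z

lemma matDm_apply (m : ℕ) (Z : ℝ → Matrix (Fin n) (Fin n) ℝ) (x : ℝ) (i j : Fin n) :
    matDm m Z x i j = if (i : ℕ) < m then matD Z x i j else Z x i j := rfl

lemma Estep_apply (m M s : ℕ) (Z : ℝ → Matrix (Fin n) (Fin n) ℝ) (x : ℝ) (i j : Fin n) :
    Estep m M s Z x i j = if s < M ∧ m ≤ (i : ℕ) then Z x i j else matD Z x i j := by
  unfold Estep
  split_ifs with h1 h2 h2
  · rw [matDm_apply, if_neg (by omega)]
  · rw [matDm_apply, if_pos (by omega)]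
  · omega
  · rfl

lemma Estep_congr {I : Set ℝ} (hI : IsOpen I) (m M s : ℕ)
    {Y Z : ℝ → Matrix (Fin n) (Fin n) ℝ} (h : ∀ x ∈ I, Y x = Z x) {x : ℝ} (hx : x ∈ I) :
    Estep m M s Y x = Estep m M s Z x := by
  ext i j
  rw [Estep_apply, Estep_apply, h x hx,
    matD_congr hI (fun t ht => by rw [h t ht]) hx (Y := Y) (Z := Z)]

lemma Estep_sum {I : Set ℝ} (hI : IsOpen I) (m M s' : ℕ) (s : Finset ℕ)
    {Y : ℕ → ℝ → Matrix (Fin n) (Fin n) ℝ}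
    (hY : ∀ r ∈ s, SmOn I (Y r)) {x : ℝ} (hx : x ∈ I) :
    Estep m M s' (fun t => ∑ r ∈ s, Y r t) x = ∑ r ∈ s, Estep m M s' (Y r) x := by
  ext i j
  rw [Estep_apply, matD_sum hI s hY hx]
  simp only [Matrix.sum_apply, Estep_apply]
  split_ifs <;> rfl

lemma SmOn.Estep {I : Set ℝ} (hI : IsOpen I) (m M s : ℕ) {Z : ℝ → Matrix (Fin n) (Fin n) ℝ}
    (h : SmOn I Z) : SmOn I (Estep m M s Z) := by
  unfold SingularDarboux.Estep
  split_ifs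
  exacts [h.matDm hI m, h.matD hI]

/-- generic blocks. -/
def Gb (m M : ℕ) : ℕ → (ℝ → Matrix (Fin n) (Fin n) ℝ) → ℝ → Matrix (Fin n) (Fin n) ℝ
  | 0, Z => Z
  | r + 1, Z => Estep m M r (Gb m M r Z)

lemma SmOn.Gb {I : Set ℝ} (hI : IsOpen I) (m M r : ℕ) {Z : ℝ → Matrix (Fin n) (Fin n) ℝ}
    (h : SmOn I Z) : SmOn I (Gb m M r Z) := by
  induction r with
  | zero => exact h
  | succ r ih => exact ih.Estep hI m M r

lemma Gb_lt (m M r : ℕ) (hr : r ≤ M) (Z : ℝ → Matrix (Fin n) (Fin n) ℝ) :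
    Gb m M r Z = (matDm m)^[r] Z := by
  induction r with
  | zero => rfl
  | succ r ih =>
    rw [Function.iterate_succ_apply', ← ih (by omega)]
    simp only [Gb, Estep]
    rw [if_pos (by omega)]

lemma Gb_ge (m M r : ℕ) (Z : ℝ → Matrix (Fin n) (Fin n) ℝ) :
    Gb m M (M + r) Z = matD^[r] ((matDm m)^[M] Z) := by
  induction r with
  | zero => exact Gb_lt m M M le_rfl Z
  | succ r ih =>
    rw [Function.iterate_succ_apply', ← ih]
    rw [← add_assoc, Gb, Estep, if_neg (by omega)]

/-- `(∂Y)Y⁻¹` of step `s`. -/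
def Ac (m M : ℕ) (U : ℕ → ℝ → Matrix (Fin n) (Fin n) ℝ) (s : ℕ) : ℝ → Matrix (Fin n) (Fin n) ℝ :=
  fun x => matD (chainM m M U s (U s)) x * (chainM m M U s (U s) x)⁻¹

lemma chainM_succ (m M : ℕ) (U : ℕ → ℝ → Matrix (Fin n) (Fin n) ℝ) (s : ℕ)
    (Z : ℝ → Matrix (Fin n) (Fin n) ℝ) (x : ℝ) :
    chainM m M U (s + 1) Z x =
      Estep m M s (chainM m M U s Z) x - Ac m M U s x * chainM m M U s Z x := by
  simp only [chainM, LstepM, Estep, Ac, decide_eq_true_eq]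
  split_ifs <;> rfl

/-- coefficients of `L_{s←0}`. -/
def Bc (m M : ℕ) (U : ℕ → ℝ → Matrix (Fin n) (Fin n) ℝ) :
    ℕ → ℕ → ℝ → Matrix (Fin n) (Fin n) ℝ
  | 0, r => fun _ => if r = 0 then 1 else 0
  | s + 1, 0 => fun x => matD (Bc m M U s 0) x - Ac m M U s x * Bc m M U s 0 x
  | s + 1, r + 1 => fun x => Bc m M U s r x +
      (matD (Bc m M U s (r + 1)) x - Ac m M U s x * Bc m M U s (r + 1) x)

lemma Bc_s0 (m M : ℕ) (U : ℕ → ℝ → Matrix (Fin n) (Fin n) ℝ) (s : ℕ) (x : ℝ) :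
    Bc m M U (s + 1) 0 x = matD (Bc m M U s 0) x - Ac m M U s x * Bc m M U s 0 x := rfl

lemma Bc_ss (m M : ℕ) (U : ℕ → ℝ → Matrix (Fin n) (Fin n) ℝ) (s r : ℕ) (x : ℝ) :
    Bc m M U (s + 1) (r + 1) x = Bc m M U s r x +
      (matD (Bc m M U s (r + 1)) x - Ac m M U s x * Bc m M U s (r + 1) x) := rfl

lemma matD_zero (x : ℝ) : matD (n := n) (fun _ => 0) x = 0 := by
  ext i j; simp [matD]

lemma matD_one (x : ℝ) : matD (n := n) (fun _ => 1) x = 0 := by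
  ext i j; simp [matD]

lemma Bc_gt (m M : ℕ) (U : ℕ → ℝ → Matrix (Fin n) (Fin n) ℝ) (s r : ℕ) (h : s < r) :
    Bc m M U s r = fun _ => 0 := by
  induction s generalizing r with
  | zero => simp only [Bc]; rw [if_neg (by omega)]
  | succ s ih =>
    obtain ⟨r, rfl⟩ : ∃ r', r = r' + 1 := ⟨r - 1, by omega⟩
    simp only [Bc]
    rw [ih r (by omega), ih (r + 1) (by omega)]
    simp [matD_zero]

lemma Bc_self (m M : ℕ) (U : ℕ → ℝ → Matrix (Fin n) (Fin n) ℝ) (s : ℕ) :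
    Bc m M U s s = fun _ => 1 := by
  induction s with
  | zero => simp only [Bc]; rfl
  | succ s ih =>
    simp only [Bc]
    rw [ih, Bc_gt m M U s (s + 1) (by omega)]
    simp [matD_zero]

lemma Bc_F (m M : ℕ) (U : ℕ → ℝ → Matrix (Fin n) (Fin n) ℝ) (s : ℕ) (x : ℝ) :
    Bc m M U (s + 1) s x = - chainF m M U (s + 1) x := by
  induction s with
  | zero =>
    simp only [Bc, chainF, Ac, if_true, matD_one]
    simp
  | succ s ih =>
    rw [Bc_ss, ih, Bc_self, matD_one, mul_one, zero_sub, ← neg_add]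
    rfl

section main

variable {m M N : ℕ} {U : ℕ → ℝ → Matrix (Fin n) (Fin n) ℝ} {I : Set ℝ}

lemma chain_smooth (hI : IsOpen I) (hU : ∀ k < N, SmOn I (U k))
    (hYinv : ∀ s < N, ∀ x ∈ I, (chainM m M U s (U s) x).det ≠ 0) (s : ℕ) (hs : s ≤ N) :
    ∀ Z, SmOn I Z → SmOn I (chainM m M U s Z) := by
  induction s with
  | zero => intro Z h; exact h
  | succ s ih =>
    intro Z hZ
    have ih := ih (by omega)
    have hY := ih _ (hU s (by omega))
    have hA : SmOn I (Ac m M U s) := (hY.matD hI).mul (hY.inv (hYinv s (by omega)))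
    have := ((ih Z hZ).Estep hI m M s).sub (hA.mul (ih Z hZ))
    have e : chainM m M U (s + 1) Z = _ := funext fun x => chainM_succ m M U s Z x
    rw [e]
    exact this

lemma Ac_smooth (hI : IsOpen I) (hU : ∀ k < N, SmOn I (U k))
    (hYinv : ∀ s < N, ∀ x ∈ I, (chainM m M U s (U s) x).det ≠ 0) (s : ℕ) (hs : s < N) :
    SmOn I (Ac m M U s) := by
  have hY := chain_smooth hI hU hYinv s hs.le _ (hU s hs)
  exact (hY.matD hI).mul (hY.inv (hYinv s hs))

lemma Bc_smooth (hI : IsOpen I) (hU : ∀ k < N, SmOn I (U k))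
    (hYinv : ∀ s < N, ∀ x ∈ I, (chainM m M U s (U s) x).det ≠ 0) (s : ℕ) (hs : s ≤ N) :
    ∀ r, SmOn I (Bc m M U s r) := by
  induction s with
  | zero => intro r i j; simp only [Bc]; exact contDiffOn_const
  | succ s ih =>
    have ih := ih (by omega)
    have hA := Ac_smooth hI hU hYinv s hs
    intro r
    cases r with
    | zero => rw [Bc]; exact ((ih 0).matD hI).sub (hA.mul (ih 0))
    | succ r => rw [Bc]; exact (ih r).add (((ih (r+1)).matD hI).sub (hA.mul (ih (r+1))))

/-- block diagonal on a set. -/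
def BDOn (m : ℕ) (I : Set ℝ) (U : ℝ → Matrix (Fin n) (Fin n) ℝ) : Prop :=
  ∀ x ∈ I, ∀ i j : Fin n, (m ≤ (i : ℕ) ∨ m ≤ (j : ℕ)) → U x i j = if i = j then 1 else 0

lemma Ac_block_aux (hI : IsOpen I) (s : ℕ)
    (hd : ∀ x ∈ I, (chainM m M U s (U s) x).det ≠ 0)
    (hY : BDOn m I (chainM m M U s (U s))) :
    ∀ x ∈ I, ∀ i j : Fin n, (m ≤ (i : ℕ) ∨ m ≤ (j : ℕ)) → Ac m M U s x i j = 0 := by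
  intro x hx i j hij
  have hz : ∀ i j : Fin n, (m ≤ (i : ℕ) ∨ m ≤ (j : ℕ)) →
      matD (chainM m M U s (U s)) x i j = 0 := fun i j h =>
    matD_const hI (fun t ht => hY t ht i j h) hx
  by_cases hi : m ≤ (i : ℕ)
  · simp only [Ac, Matrix.mul_apply]
    exact Finset.sum_eq_zero fun l _ => by rw [hz i l (Or.inl hi), zero_mul]
  · have hj : m ≤ (j : ℕ) := by tauto
    have h1 : Ac m M U s x * chainM m M U s (U s) x = matD (chainM m M U s (U s)) x := by
      simp only [Ac]
      exact Matrix.nonsing_inv_mul_cancel_right _ _ (hd x hx).isUnit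
    have h2 := congrFun (congrFun h1 i) j
    rw [hz i j (Or.inr hj), Matrix.mul_apply] at h2
    rw [← h2, Finset.sum_eq_single j]
    · rw [hY x hx j j (Or.inl hj)]; simp
    · intro l _ hl
      rw [hY x hx l j (Or.inr hj), if_neg hl, mul_zero]
    · simp

lemma chain_block (hI : IsOpen I) (hMN : M ≤ N)
    (hYinv : ∀ s < N, ∀ x ∈ I, (chainM m M U s (U s) x).det ≠ 0)
    (hB : ∀ k < M, BDOn m I (U k)) (s : ℕ) (hs : s ≤ M) :
    ∀ k < M, BDOn m I (chainM m M U s (U k)) := by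
  induction s with
  | zero => exact hB
  | succ s ih =>
    intro k hk x hx i j hij
    have ih := ih (by omega)
    have hA := Ac_block_aux hI s (hYinv s (by omega)) (ih s (by omega)) x hx
    have hY := ih k hk
    rw [chainM_succ, Matrix.sub_apply, Estep_apply, Matrix.mul_apply]
    have h0 : ∑ l, Ac m M U s x i l * chainM m M U s (U k) x l j = 0 := by
      refine Finset.sum_eq_zero fun l _ => ?_
      by_cases hil : m ≤ (i : ℕ) ∨ m ≤ (l : ℕ)
      · rw [hA i l hil, zero_mul]
      · rw [hY x hx l j (by tauto), if_neg, mul_zero]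
        rintro rfl
        tauto
    rw [h0, sub_zero]
    split_ifs with h1 h2 h2
    · rw [hY x hx i j hij, if_pos h2]
    · rw [hY x hx i j hij, if_neg h2]
    · subst h2
      omega
    · exact matD_const hI (fun t ht => hY t ht i j hij) hx

lemma Ac_block (hI : IsOpen I) (hMN : M ≤ N)
    (hYinv : ∀ s < N, ∀ x ∈ I, (chainM m M U s (U s) x).det ≠ 0)
    (hB : ∀ k < M, BDOn m I (U k)) (s : ℕ) (hs : s < M) :
    ∀ x ∈ I, ∀ i j : Fin n, (m ≤ (i : ℕ) ∨ m ≤ (j : ℕ)) → Ac m M U s x i j = 0 :=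
  Ac_block_aux hI s (hYinv s (by omega)) (chain_block hI hMN hYinv hB s hs.le s hs)

lemma Bc_block (hI : IsOpen I) (hMN : M ≤ N)
    (hYinv : ∀ s < N, ∀ x ∈ I, (chainM m M U s (U s) x).det ≠ 0)
    (hB : ∀ k < M, BDOn m I (U k)) (s : ℕ) (hs : s ≤ M) :
    ∀ r, ∀ x ∈ I, ∀ i j : Fin n, (m ≤ (i : ℕ) ∨ m ≤ (j : ℕ)) →
      Bc m M U s r x i j = if i = j ∧ r = s then 1 else 0 := by
  induction s with
  | zero =>
    intro r x hx i j hij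
    by_cases hr : r = 0 <;> simp [Bc, hr, Matrix.one_apply]
  | succ s ih =>
    have ih := ih (by omega)
    have hA := Ac_block hI hMN hYinv hB s (by omega)
    have key : ∀ r, ∀ x ∈ I, ∀ i j : Fin n, (m ≤ (i : ℕ) ∨ m ≤ (j : ℕ)) →
        (matD (Bc m M U s r) x - Ac m M U s x * Bc m M U s r x) i j = 0 := by
      intro r x hx i j hij
      rw [Matrix.sub_apply, matD_const hI (fun t ht => ih r t ht i j hij) hx,
        Matrix.mul_apply, zero_sub, neg_eq_zero]
      refine Finset.sum_eq_zero fun l _ => ?_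
      by_cases hil : m ≤ (i : ℕ) ∨ m ≤ (l : ℕ)
      · rw [hA x hx i l hil, zero_mul]
      · rw [ih r x hx l j (by tauto), if_neg, mul_zero]
        rintro ⟨rfl, -⟩
        tauto
    intro r x hx i j hij
    cases r with
    | zero => rw [Bc_s0, key 0 x hx i j hij, if_neg (by omega)]
    | succ r =>
      rw [Bc_ss, Matrix.add_apply, key (r + 1) x hx i j hij, ih r x hx i j hij, add_zero]
      simp

lemma Bc_cols (hI : IsOpen I) (hMN : M ≤ N)
    (hYinv : ∀ s < N, ∀ x ∈ I, (chainM m M U s (U s) x).det ≠ 0)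
    (hB : ∀ k < M, BDOn m I (U k)) (s : ℕ) (hs : M ≤ s) :
    ∀ r < M, ∀ x ∈ I, ∀ i j : Fin n, m ≤ (j : ℕ) → Bc m M U s r x i j = 0 := by
  induction s, hs using Nat.le_induction with
  | base =>
    intro r hr x hx i j hj
    rw [Bc_block hI hMN hYinv hB M le_rfl r x hx i j (Or.inr hj), if_neg (by omega)]
  | succ s hs ih =>
    have key : ∀ r < M, ∀ x ∈ I, ∀ i j : Fin n, m ≤ (j : ℕ) →
        (matD (Bc m M U s r) x - Ac m M U s x * Bc m M U s r x) i j = 0 := by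
      intro r hr x hx i j hj
      rw [Matrix.sub_apply, matD_const hI (fun t ht => ih r hr t ht i j hj) hx,
        Matrix.mul_apply, zero_sub, neg_eq_zero]
      refine Finset.sum_eq_zero fun l _ => ?_
      rw [ih r hr x hx l j hj, mul_zero]
    intro r hr x hx i j hj
    cases r with
    | zero => rw [Bc_s0, key 0 hr x hx i j hj]
    | succ r =>
      rw [Bc_ss, Matrix.add_apply, key (r + 1) hr x hx i j hj, ih r (by omega) x hx i j hj, add_zero]

lemma Estep_Bc (hI : IsOpen I) (hMN : M ≤ N) (hU : ∀ k < N, SmOn I (U k))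
    (hYinv : ∀ s < N, ∀ x ∈ I, (chainM m M U s (U s) x).det ≠ 0)
    (hB : ∀ k < M, BDOn m I (U k)) (s : ℕ) (hs : s < N) (r : ℕ) (hr : r ≤ s)
    (Z : ℝ → Matrix (Fin n) (Fin n) ℝ) (hZ : SmOn I Z) (x : ℝ) (hx : x ∈ I) :
    Estep m M s (fun t => Bc m M U s r t * Gb m M r Z t) x =
      matD (Bc m M U s r) x * Gb m M r Z x + Bc m M U s r x * Gb m M (r + 1) Z x := by
  have hG := hZ.Gb hI m M r
  have hBs := Bc_smooth hI hU hYinv s hs.le r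
  ext i j
  rw [Estep_apply, Gb]
  split_ifs with h
  · obtain ⟨h1, h2⟩ := h
    have hb := Bc_block hI hMN hYinv hB s h1.le r
    rw [Matrix.add_apply, Matrix.mul_apply, Matrix.mul_apply, Matrix.mul_apply,
      ← Finset.sum_add_distrib]
    refine Finset.sum_congr rfl fun l _ => ?_
    rw [matD_const hI (fun t ht => hb t ht i l (Or.inl h2)) hx, zero_mul, zero_add, Estep_apply]
    split_ifs with h3
    · rfl
    · rw [hb x hx i l (Or.inl h2), if_neg, zero_mul, zero_mul]
      rintro ⟨rfl, -⟩
      omega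
  · rw [matD_mul hI hBs hG hx, Matrix.add_apply, Matrix.add_apply]
    congr 1
    rw [Matrix.mul_apply, Matrix.mul_apply]
    refine Finset.sum_congr rfl fun l _ => ?_
    rw [Estep_apply]
    split_ifs with h3
    · have : Bc m M U s r x i l = 0 := by
        by_cases hsM : s < M
        · rw [Bc_block hI hMN hYinv hB s hsM.le r x hx i l (Or.inr h3.2), if_neg]
          rintro ⟨rfl, -⟩
          omega
        · exact Bc_cols hI hMN hYinv hB s (by omega) r h3.1 x hx i l h3.2
      rw [this, zero_mul, zero_mul]
    · rfl

lemma chain_expand (hI : IsOpen I) (hMN : M ≤ N) (hU : ∀ k < N, SmOn I (U k))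
    (hYinv : ∀ s < N, ∀ x ∈ I, (chainM m M U s (U s) x).det ≠ 0)
    (hB : ∀ k < M, BDOn m I (U k))
    (Z : ℝ → Matrix (Fin n) (Fin n) ℝ) (hZ : SmOn I Z) (s : ℕ) (hs : s ≤ N) :
    ∀ x ∈ I, chainM m M U s Z x = ∑ r ∈ Finset.range (s + 1), Bc m M U s r x * Gb m M r Z x := by
  induction s with
  | zero => intro x hx; simp [chainM, Bc, Gb]
  | succ s ih =>
    intro x hx
    have ih := ih (by omega)
    rw [chainM_succ, Estep_congr hI m M s ih hx, Estep_sum hI m M s _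
      (fun r _ => (Bc_smooth hI hU hYinv s (by omega) r).mul (hZ.Gb hI m M r)) hx, ih x hx,
      Finset.sum_congr rfl fun r hr => Estep_Bc hI hMN hU hYinv hB s (by omega) r
        (by simpa [Nat.lt_succ_iff] using hr) Z hZ x hx, Finset.sum_add_distrib]
    have e : ∑ r ∈ Finset.range (s + 1 + 1), Bc m M U (s + 1) r x * Gb m M r Z x =
        ∑ r ∈ Finset.range (s + 1 + 1),
          (matD (Bc m M U s r) x - Ac m M U s x * Bc m M U s r x) * Gb m M r Z x +
        ∑ r ∈ Finset.range (s + 1), Bc m M U s r x * Gb m M (r + 1) Z x := by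
      rw [Finset.sum_range_succ' _ (s + 1), Finset.sum_range_succ' _ (s + 1)]
      simp only [Bc, add_mul, Finset.sum_add_distrib]
      abel
    rw [e, Finset.sum_range_succ _ (s + 1), Bc_gt m M U s (s + 1) (by omega), matD_zero]
    simp only [sub_mul, Finset.sum_sub_distrib, mul_zero, zero_mul, sub_zero, add_zero,
      Finset.mul_sum, mul_assoc]
    abel

lemma chain_zero (hI : IsOpen I) (Z : ℝ → Matrix (Fin n) (Fin n) ℝ) (s : ℕ) (j : Fin n)
    (h : ∀ x ∈ I, ∀ i, chainM m M U s Z x i j = 0) (s' : ℕ) (hs : s ≤ s') :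
    ∀ x ∈ I, ∀ i, chainM m M U s' Z x i j = 0 := by
  induction s', hs using Nat.le_induction with
  | base => exact h
  | succ s' hs ih =>
    intro x hx i
    rw [chainM_succ, Matrix.sub_apply, Estep_apply, ih x hx,
      matD_const hI (fun t ht => ih t ht i) hx, Matrix.mul_apply, Finset.sum_eq_zero]
    · simp
    · intro l _
      rw [ih x hx, mul_zero]

lemma chain_kill (hI : IsOpen I) (hMN : M ≤ N)
    (hYinv : ∀ s < N, ∀ x ∈ I, (chainM m M U s (U s) x).det ≠ 0)
    (hB : ∀ k < M, BDOn m I (U k)) (k : ℕ) (hk : k < N) (j : Fin n)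
    (hj : M ≤ k ∨ (j : ℕ) < m) :
    ∀ x ∈ I, ∀ i, chainM m M U N (U k) x i j = 0 := by
  refine chain_zero hI (U k) (k + 1) j ?_ N hk
  intro x hx i
  have h1 : Ac m M U k x * chainM m M U k (U k) x = matD (chainM m M U k (U k)) x := by
    simp only [Ac]
    exact Matrix.nonsing_inv_mul_cancel_right _ _ (hYinv k hk x hx).isUnit
  rw [chainM_succ, h1, Matrix.sub_apply, Estep_apply]
  split_ifs with h
  · have hb := chain_block hI hMN hYinv hB k h.1.le k h.1
    have hne : i ≠ j := by rintro rfl; omega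
    rw [matD_const hI (fun t ht => hb t ht i j (Or.inl h.2)) hx, hb x hx i j (Or.inl h.2),
      if_neg hne, sub_zero]
  · exact sub_self _

end main

lemma Gb_const (m M : ℕ) (Z : ℝ → Matrix (Fin n) (Fin n) ℝ) {I : Set ℝ} (hI : IsOpen I)
    (i j : Fin n) (h : ∀ x ∈ I, Z x i j = 0) (r : ℕ) : ∀ x ∈ I, Gb m M r Z x i j = 0 := by
  induction r with
  | zero => exact h
  | succ r ih =>
    intro x hx
    rw [Gb, Estep_apply, ih x hx, matD_const hI ih hx]
    simp

lemma matD_iter_const (Z : ℝ → Matrix (Fin n) (Fin n) ℝ) {I : Set ℝ} (hI : IsOpen I)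
    (i j : Fin n) (c : ℝ) (h : ∀ x ∈ I, Z x i j = c) (r : ℕ) :
    ∀ x ∈ I, matD^[r + 1] Z x i j = 0 := by
  induction r with
  | zero => intro x hx; exact matD_const hI h hx
  | succ r ih =>
    intro x hx
    rw [Function.iterate_succ_apply']
    exact matD_const hI ih hx

lemma Gb_top (m M : ℕ) (Z : ℝ → Matrix (Fin n) (Fin n) ℝ) (i j : Fin n) (hi : (i : ℕ) < m)
    (r : ℕ) : ∀ x, Gb m M r Z x i j = matD^[r] Z x i j := by
  induction r with
  | zero => intro x; rfl
  | succ r ih =>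
    intro x
    rw [Gb, Estep_apply, if_neg (by omega), Function.iterate_succ_apply']
    exact matD_congr isOpen_univ (fun t _ => ih t) (Set.mem_univ x)

lemma matDm_iter_low (m : ℕ) (Z : ℝ → Matrix (Fin n) (Fin n) ℝ) (i j : Fin n)
    (hi : m ≤ (i : ℕ)) (r : ℕ) : ∀ x, (matDm m)^[r] Z x i j = Z x i j := by
  induction r with
  | zero => intro x; rfl
  | succ r ih =>
    intro x
    rw [Function.iterate_succ_apply', matDm_apply, if_neg (by omega), ih x]

lemma matDm_iter_top (m : ℕ) (Z : ℝ → Matrix (Fin n) (Fin n) ℝ) (i j : Fin n)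
    (hi : (i : ℕ) < m) (r : ℕ) : ∀ x, (matDm m)^[r] Z x i j = matD^[r] Z x i j := by
  intro x
  rw [← Gb_lt m r r le_rfl, Gb_top m r Z i j hi r x]

lemma Wblock_col (m M : ℕ) (Z : ℝ → Matrix (Fin n) (Fin n) ℝ) {I : Set ℝ} (hI : IsOpen I)
    (k : ℕ) (hk : k < M) (hB : BDOn m I Z) (r : ℕ) (x : ℝ) (hx : x ∈ I) (i j : Fin n)
    (hj : (j : ℕ) < m) :
    Wblock m M r k Z x i j = Gb m M r Z x i j := by
  by_cases hi : (i : ℕ) < m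
  · rw [Gb_top m M Z i j hi, Wblock, if_pos hk]
    split_ifs
    · exact matDm_iter_top m Z i j hi r x
    · rfl
  · have hz : ∀ x ∈ I, Z x i j = 0 := fun x hx => by
      rw [hB x hx i j (Or.inl (by omega)), if_neg]
      rintro rfl
      omega
    rw [Gb_const m M Z hI i j hz r x hx, Wblock, if_pos hk]
    split_ifs with h
    · rw [matDm_iter_low m Z i j (by omega), hz x hx]
    · obtain ⟨r, rfl⟩ : ∃ r', r = r' + 1 := ⟨r - 1, by omega⟩
      exact matD_iter_const Z hI i j 0 hz r x hx

lemma Wblock_gen (m M : ℕ) (Z : ℝ → Matrix (Fin n) (Fin n) ℝ) (k : ℕ) (hk : M ≤ k) (r : ℕ) :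
    Wblock m M r k Z = Gb m M r Z := by
  rw [Wblock, if_neg (by omega)]
  split_ifs with h
  · rw [Gb_lt m M r h.le]
  · obtain ⟨r, rfl⟩ : ∃ r', r = M + r' := ⟨r - M, by omega⟩
    rw [Gb_ge]
    simp

lemma row_identity {m M N : ℕ} (hM : 1 ≤ M) (hMN : M ≤ N)
    {U : ℕ → ℝ → Matrix (Fin n) (Fin n) ℝ} {I : Set ℝ} (hI : IsOpen I)
    (hU : ∀ k < N, SmOn I (U k))
    (hYinv : ∀ s < N, ∀ x ∈ I, (chainM m M U s (U s) x).det ≠ 0)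
    (hB : ∀ k < M, BDOn m I (U k)) (k : ℕ) (hk : k < N) (x : ℝ) (hx : x ∈ I) (i j : Fin n) :
    Wrow m M N k (U k) i x j =
      ∑ r ∈ Finset.range N, ∑ l, -Bc m M U N r x i l * Wblock m M r k (U k) x l j := by
  by_cases hj : M ≤ k ∨ (j : ℕ) < m
  · have h1 := chain_kill hI hMN hYinv hB k hk j hj x hx i
    rw [chain_expand hI hMN hU hYinv hB (U k) (hU k hk) N le_rfl x hx,
      Finset.sum_range_succ, Bc_self, one_mul, Matrix.add_apply, Matrix.sum_apply] at h1
    have h2 : Wrow m M N k (U k) i x j = Gb m M N (U k) x i j := by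
      by_cases hkM : k < M
      · have := Wblock_col m M (U k) hI k hkM (hB k hkM) N x hx i j (by omega)
        rw [← this, Wrow, Wblock, if_pos hkM, if_pos hkM, if_neg (by omega)]
      · rw [← Wblock_gen m M (U k) k (by omega) N, Wrow, Wblock, if_neg hkM, if_neg hkM,
          if_neg (by omega)]
    have h3 : ∀ r l, Wblock m M r k (U k) x l j = Gb m M r (U k) x l j := by
      intro r l
      by_cases hkM : k < M
      · exact Wblock_col m M (U k) hI k hkM (hB k hkM) r x hx l j (by omega)
      · rw [Wblock_gen m M (U k) k (by omega) r]
    simp only [h2, h3, neg_mul, Finset.sum_neg_distrib]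
    simp only [Matrix.mul_apply] at h1
    linarith
  · push Not at hj
    have hb := hB k hj.1
    obtain ⟨N', rfl⟩ : ∃ r', N = r' + 1 := ⟨N - 1, by omega⟩
    rw [Wrow, if_pos hj.1, matD_iter_const (U k) hI i j _
      (fun t ht => hb t ht i j (Or.inr hj.2)) N' x hx]
    symm
    refine Finset.sum_eq_zero fun r _ => Finset.sum_eq_zero fun l _ => ?_
    rw [Wblock, if_pos hj.1]
    split_ifs with h
    · by_cases hl : m ≤ (l : ℕ)
      · rw [Bc_cols hI hMN hYinv hB _ hMN r (by omega) x hx i l hl]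
        simp
      · have : (matDm m)^[r] (U k) x l j = 0 := by
          rw [← Gb_lt m M r (by omega)]
          refine Gb_const m M _ hI l j (fun t ht => ?_) r x hx
          rw [hb t ht l j (Or.inr hj.2), if_neg]
          rintro rfl
          omega
        rw [this, mul_zero]
    · obtain ⟨r, rfl⟩ : ∃ r', r = r' + 1 := ⟨r - 1, by omega⟩
      rw [matD_iter_const (U k) hI l j _
        (fun t ht => hb t ht l j (Or.inr hj.2)) r x hx, mul_zero]

/-- Theorem 2 of the paper: the entries of the matrix `F_N` defined by the recursion
`F_0 = 0`, `F_k = F_{k-1} + (∂Y_k)Y_k⁻¹`, are given by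
`f^N_{ij} = det W_{i,j}(U₁,…,U_M;U_{M+1},…,U_N) / det W(U₁,…,U_M;U_{M+1},…,U_N)`. -/
theorem transformed_potential_formula {n : ℕ} (m M N : ℕ)
    (hm : 1 ≤ m) (hmn : m < n) (hM : 1 ≤ M) (hMN : M ≤ N)
    (U : ℕ → ℝ → Matrix (Fin n) (Fin n) ℝ)
    (hUsmooth : ∀ k < N, SmoothMat (U k)) (hUblk : ∀ k < M, BlockDiag m (U k))
    (a b : ℝ)
    (hYinv : ∀ s < N, ∀ x ∈ Set.Ioo a b, (chainM m M U s (U s) x).det ≠ 0)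
    (hdet : ∀ x ∈ Set.Ioo a b, (Wmat m M N U x).det ≠ 0) :
    ∀ x ∈ Set.Ioo a b, ∀ i j : Fin n,
      chainF m M U N x i j =
        (WijMat m M N i j U x).det / (Wmat m M N U x).det := by
  intro x hx i j
  have hU : ∀ k < N, SmOn (Set.Ioo a b) (U k) := fun k hk i j => (hUsmooth k hk i j).contDiffOn
  have hB : ∀ k < M, BDOn m (Set.Ioo a b) (U k) := fun k hk x _ => hUblk k hk x
  obtain ⟨N, rfl⟩ : ∃ r', N = r' + 1 := ⟨N - 1, by omega⟩
  have key := row_identity hM hMN isOpen_Ioo hU hYinv hB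
  let c : Fin (N + 1) × Fin n → ℝ := fun p => -Bc m M U (N + 1) p.1 x i p.2
  have hW : WijMat m M (N + 1) i j U x = (Wmat m M (N + 1) U x).updateRow (Fin.last N, j)
      (∑ p, c p • Wmat m M (N + 1) U x p) := by
    ext p q
    by_cases hp : p = (Fin.last N, j)
    · subst hp
      rw [Matrix.updateRow_self, Finset.sum_apply, Fintype.sum_prod_type]
      simp only [WijMat, Matrix.of_apply]
      rw [if_pos (by simp), key q.1 q.1.2 x hx i q.2, Finset.sum_range]
      rfl
    · rw [Matrix.updateRow_ne hp]
      simp only [WijMat, Wmat, Matrix.of_apply]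
      rw [if_neg]
      rintro ⟨h1, h2⟩
      exact hp (Prod.ext (Fin.ext (by simpa using h1)) h2)
  rw [hW, Matrix.det_updateRow_sum, smul_eq_mul, mul_div_assoc, div_self (hdet x hx), mul_one]
  simp only [c, Fin.val_last, Bc_F, Matrix.neg_apply, neg_neg]

end SingularDarboux
end
end

section
/- Let M = N and let U₁,…,U_N be as in the context (all of block-diagonal form diag(Ũ_k, I_{n−m})). Then for every l with m < l ≤ n, the determinant of W_{l,l}(U₁,…,U_N) vanishes identically: det W_{l,l}(U₁,…,U_N) = 0. -/
open Matrix

noncomputable section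

namespace SingularDarboux

variable {n : ℕ}

theorem matD_iter_row {n : ℕ} (U : ℝ → Matrix (Fin n) (Fin n) ℝ) (l : Fin n)
    (c : Fin n → ℝ) (h : ∀ x j, U x l j = c j) (r : ℕ) :
    ∀ x j, matD^[r + 1] U x l j = 0 := by
  induction r with
  | zero => intro x j; simp [matD, h]
  | succ r ih =>
    intro x j
    rw [Function.iterate_succ_apply']
    have e : (fun t => matD^[r + 1] U t l j) = fun _ => (0 : ℝ) := funext fun t => ih t j
    change deriv (fun t => matD^[r + 1] U t l j) x = 0
    rw [e, deriv_const]

/-- For a purely singular chain (`M = N`) and `m < l ≤ n` (1-indexed, i.e.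
`m ≤ l` for the 0-indexed `l : Fin n`), the determinant of
`W_{l,l}(U₁,…,U_N)` vanishes identically. -/
theorem det_Wll_vanishes {n : ℕ} (m N : ℕ) (hm : 1 ≤ m) (hmn : m < n) (hN : 1 ≤ N)
    (U : ℕ → ℝ → Matrix (Fin n) (Fin n) ℝ)
    (hUsmooth : ∀ k < N, SmoothMat (U k)) (hUblk : ∀ k < N, BlockDiag m (U k)) :
    ∀ l : Fin n, m ≤ (l : ℕ) → ∀ x : ℝ, (WijMat m N N l l U x).det = 0 := by
  intro l hl x
  obtain ⟨N, rfl⟩ : ∃ K, N = K + 1 := ⟨N - 1, by omega⟩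
  apply Matrix.det_eq_zero_of_row_eq_zero (Fin.last N, l)
  rintro ⟨k, j⟩
  have hk : (k : ℕ) < N + 1 := k.2
  have h := matD_iter_row (U k) l (fun j => if l = j then 1 else 0)
    (fun x j => hUblk k hk x l j (Or.inl hl)) N x j
  simp only [WijMat, Matrix.of_apply, Wrow, Fin.val_last, Nat.add_sub_cancel, and_self, if_true,
    if_pos hk]
  exact h

end SingularDarboux
end
end

section
/- First-order matrix Darboux transformation (regular case): let V₀ be a smooth n×n real matrix-valued function on an open interval, let Λ be a constant real n×n diagonal matrix, and let U be a smooth n×n matrix-valued function with U(x) invertible on the interval and satisfying −U″ + V₀U = UΛ. Set F₁ = (∂U)U⁻¹ and V₁ = V₀ − 2∂F₁. If Ψ is a smooth n-vector-valued function satisfying −Ψ″ + V₀Ψ = EΨ for a real constant E, then Φ = Ψ′ − F₁Ψ satisfies −Φ″ + V₁Φ = EΦ on the interval. -/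
open Matrix

noncomputable section

namespace SingularDarboux

variable {n : ℕ}

def HM (U : ℝ → Matrix (Fin n) (Fin n) ℝ) (U' : Matrix (Fin n) (Fin n) ℝ) (x : ℝ) : Prop :=
  ∀ i j, HasDerivAt (fun t => U t i j) (U' i j) x

def HV (U : ℝ → Fin n → ℝ) (U' : Fin n → ℝ) (x : ℝ) : Prop :=
  ∀ i, HasDerivAt (fun t => U t i) (U' i) x

lemma HM.matD_eq {U : ℝ → Matrix (Fin n) (Fin n) ℝ} {U'} {x : ℝ} (h : HM U U' x) :
    matD U x = U' := by
  ext i j; exact (h i j).deriv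

lemma HV.vecD_eq {U : ℝ → Fin n → ℝ} {U'} {x : ℝ} (h : HV U U' x) :
    vecD U x = U' := by
  ext i; exact (h i).deriv

lemma HV.congr {U W : ℝ → Fin n → ℝ} {U'} {x : ℝ} (h : HV U U' x)
    (e : W =ᶠ[nhds x] U) : HV W U' x := by
  intro i
  refine (h i).congr_of_eventuallyEq ?_
  filter_upwards [e] with t ht
  rw [ht]

lemma HM.mul {A B : ℝ → Matrix (Fin n) (Fin n) ℝ} {A' B'} {x : ℝ} (hA : HM A A' x)
    (hB : HM B B' x) : HM (fun t => A t * B t) (A' * B x + A x * B') x := by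
  intro i j
  simp only [Matrix.mul_apply, Matrix.add_apply, ← Finset.sum_add_distrib]
  exact HasDerivAt.fun_sum fun k _ => (hA i k).mul (hB k j)

lemma HM.mulVec {A : ℝ → Matrix (Fin n) (Fin n) ℝ} {B : ℝ → Fin n → ℝ} {A' B'} {x : ℝ}
    (hA : HM A A' x) (hB : HV B B' x) :
    HV (fun t => (A t).mulVec (B t)) (A'.mulVec (B x) + (A x).mulVec B') x := by
  intro i
  simp only [Matrix.mulVec, dotProduct, Pi.add_apply, ← Finset.sum_add_distrib]
  exact HasDerivAt.fun_sum fun k _ => (hA i k).mul (hB k)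

lemma HM.const (A : Matrix (Fin n) (Fin n) ℝ) (x : ℝ) : HM (fun _ => A) 0 x :=
  fun _ _ => hasDerivAt_const _ _

lemma HV.add {A B : ℝ → Fin n → ℝ} {A' B'} {x : ℝ} (hA : HV A A' x) (hB : HV B B' x) :
    HV (fun t => A t + B t) (A' + B') x := fun i => (hA i).add (hB i)

lemma HV.sub {A B : ℝ → Fin n → ℝ} {A' B'} {x : ℝ} (hA : HV A A' x) (hB : HV B B' x) :
    HV (fun t => A t - B t) (A' - B') x := fun i => (hA i).sub (hB i)

lemma HV.smul {A : ℝ → Fin n → ℝ} {A'} {x : ℝ} (c : ℝ) (hA : HV A A' x) :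
    HV (fun t => c • A t) (c • A') x := fun i => (hA i).const_mul c

lemma diff_det {A : ℝ → Matrix (Fin n) (Fin n) ℝ} {x : ℝ}
    (h : ∀ i j, DifferentiableAt ℝ (fun t => A t i j) x) :
    DifferentiableAt ℝ (fun t => (A t).det) x := by
  simp only [Matrix.det_apply]
  refine DifferentiableAt.fun_sum fun σ _ => ?_
  refine DifferentiableAt.const_smul ?_ _
  exact DifferentiableAt.fun_finsetProd fun i _ => h _ _

lemma HM.inv {A : ℝ → Matrix (Fin n) (Fin n) ℝ} {A'} {x : ℝ} (hA : HM A A' x)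
    (hu : ∀ᶠ t in nhds x, IsUnit (A t)) :
    HM (fun t => (A t)⁻¹) (-((A x)⁻¹ * A' * (A x)⁻¹)) x := by
  have hx : IsUnit (A x).det := (Matrix.isUnit_iff_isUnit_det _).1 hu.self_of_nhds
  have hd : ∀ i j, DifferentiableAt ℝ (fun t => (A t)⁻¹ i j) x := by
    intro i j
    simp only [Matrix.inv_def, Matrix.smul_apply, Ring.inverse_eq_inv', smul_eq_mul,
      Matrix.adjugate_apply]
    refine DifferentiableAt.mul ((diff_det fun i j => (hA i j).differentiableAt).inv hx.ne_zero)
      (diff_det fun k l => ?_)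
    by_cases hk : k = j
    · subst hk; simp
    · simpa [Matrix.updateRow_ne hk] using (hA k l).differentiableAt
  have hW : HM (fun t => (A t)⁻¹) (matD (fun t => (A t)⁻¹) x) x :=
    fun i j => (hd i j).hasDerivAt
  have h1 : HM (fun t => (A t)⁻¹ * A t) 0 x := by
    intro i j
    refine (HM.const 1 x i j).congr_of_eventuallyEq ?_
    filter_upwards [hu] with t ht
    rw [Matrix.nonsing_inv_mul _ ((Matrix.isUnit_iff_isUnit_det _).1 ht)]
  have h2 := (hW.mul hA).matD_eq.symm.trans h1.matD_eq
  have h3 : matD (fun t => (A t)⁻¹) x = -((A x)⁻¹ * A' * (A x)⁻¹) := by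
    have := congrArg (· * (A x)⁻¹) h2
    simp only [add_mul, zero_mul] at this
    rw [Matrix.mul_assoc _ (A x), Matrix.mul_nonsing_inv _ hx, mul_one] at this
    exact eq_neg_of_add_eq_zero_left this
  rwa [h3] at hW

lemma cd_deriv {f : ℝ → ℝ} {a b : ℝ} (h : ContDiffOn ℝ (⊤ : ℕ∞) f (Set.Ioo a b)) :
    ContDiffOn ℝ (⊤ : ℕ∞) (deriv f) (Set.Ioo a b) :=
  h.deriv_of_isOpen isOpen_Ioo (by simp)

lemma cd_has {f : ℝ → ℝ} {a b x : ℝ} (h : ContDiffOn ℝ (⊤ : ℕ∞) f (Set.Ioo a b))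
    (hx : x ∈ Set.Ioo a b) : HasDerivAt f (deriv f x) x :=
  ((h.differentiableOn (by simp)).differentiableAt (isOpen_Ioo.mem_nhds hx)).hasDerivAt

/-- First-order matrix Darboux transformation (regular case): if `-U'' + V₀U = UΛ`
with `U(x)` invertible and `-Ψ'' + V₀Ψ = EΨ`, then `Φ = Ψ' - (∂U)U⁻¹Ψ` solves
`-Φ'' + V₁Φ = EΦ` with `V₁ = V₀ - 2∂((∂U)U⁻¹)`. -/
theorem regular_darboux_transformation {n : ℕ} (a b : ℝ)
    (V0 : ℝ → Matrix (Fin n) (Fin n) ℝ)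
    (hV0 : ∀ i j, ContDiffOn ℝ (⊤ : ℕ∞) (fun x => V0 x i j) (Set.Ioo a b))
    (Λ : Matrix (Fin n) (Fin n) ℝ) (hΛ : Λ.IsDiag)
    (U : ℝ → Matrix (Fin n) (Fin n) ℝ)
    (hU : ∀ i j, ContDiffOn ℝ (⊤ : ℕ∞) (fun x => U x i j) (Set.Ioo a b))
    (hUinv : ∀ x ∈ Set.Ioo a b, IsUnit (U x))
    (hUeq : ∀ x ∈ Set.Ioo a b, -matD (matD U) x + V0 x * U x = U x * Λ)
    (F1 : ℝ → Matrix (Fin n) (Fin n) ℝ) (hF1 : ∀ x, F1 x = matD U x * (U x)⁻¹)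
    (V1 : ℝ → Matrix (Fin n) (Fin n) ℝ) (hV1 : ∀ x, V1 x = V0 x - (2 : ℝ) • matD F1 x)
    (E : ℝ) (Ψ : ℝ → Fin n → ℝ)
    (hΨ : ∀ i, ContDiffOn ℝ (⊤ : ℕ∞) (fun x => Ψ x i) (Set.Ioo a b))
    (hΨeq : ∀ x ∈ Set.Ioo a b, -vecD (vecD Ψ) x + (V0 x).mulVec (Ψ x) = E • Ψ x)
    (Φ : ℝ → Fin n → ℝ) (hΦ : ∀ x, Φ x = vecD Ψ x - (F1 x).mulVec (Ψ x)) :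
    ∀ x ∈ Set.Ioo a b, -vecD (vecD Φ) x + (V1 x).mulVec (Φ x) = E • Φ x := by
  have nb : ∀ x ∈ Set.Ioo a b, Set.Ioo a b ∈ nhds x := fun x hx => isOpen_Ioo.mem_nhds hx
  have dU : ∀ x ∈ Set.Ioo a b, HM U (matD U x) x := fun x hx i j => cd_has (hU i j) hx
  have dU2 : ∀ x ∈ Set.Ioo a b, HM (matD U) (matD (matD U) x) x :=
    fun x hx i j => cd_has (cd_deriv (hU i j)) hx
  have dW : ∀ x ∈ Set.Ioo a b, HM (fun t => (U t)⁻¹) (-((U x)⁻¹ * matD U x * (U x)⁻¹)) x :=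
    fun x hx => (dU x hx).inv (Filter.mem_of_superset (nb x hx) hUinv)
  have dP : ∀ x ∈ Set.Ioo a b, HV Ψ (vecD Ψ x) x := fun x hx i => cd_has (hΨ i) hx
  have dP2 : ∀ x ∈ Set.Ioo a b, HV (vecD Ψ) (vecD (vecD Ψ) x) x :=
    fun x hx i => cd_has (cd_deriv (hΨ i)) hx
  have eF : F1 = fun t => matD U t * (U t)⁻¹ := funext hF1
  have eΦ : Φ = fun t => vecD Ψ t - (F1 t).mulVec (Ψ t) := funext hΦ
  obtain ⟨G, hG⟩ : ∃ G : ℝ → Matrix (Fin n) (Fin n) ℝ, G = fun t => U t * Λ * (U t)⁻¹ := ⟨_, rfl⟩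
  have dF : ∀ x ∈ Set.Ioo a b, HM F1 (V0 x - F1 x * F1 x - G x) x := by
    intro x hx
    have h := (dU2 x hx).mul (dW x hx)
    rw [← eF] at h
    convert h using 1
    have hu := (Matrix.isUnit_iff_isUnit_det _).1 (hUinv x hx)
    have e2 : matD (matD U) x = V0 x * U x - U x * Λ := by
      rw [← hUeq x hx]; abel
    rw [e2, hG, hF1 x, sub_mul, Matrix.mul_assoc (V0 x), Matrix.mul_nonsing_inv _ hu]
    noncomm_ring
  have dG : ∀ x ∈ Set.Ioo a b, HM G (F1 x * G x - G x * F1 x) x := by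
    intro x hx
    have h := ((dU x hx).mul (HM.const Λ x)).mul (dW x hx)
    rw [← hG] at h
    convert h using 1
    have hu := (Matrix.isUnit_iff_isUnit_det _).1 (hUinv x hx)
    have e1 : matD U x * (U x)⁻¹ * (U x * Λ * (U x)⁻¹) = matD U x * Λ * (U x)⁻¹ := by
      rw [Matrix.mul_assoc (U x), ← Matrix.mul_assoc _ (U x), Matrix.mul_assoc _ _ (U x),
        Matrix.nonsing_inv_mul _ hu, mul_one, Matrix.mul_assoc]
    simp only [hG, hF1 x, e1]
    noncomm_ring
  have eP : ∀ x ∈ Set.Ioo a b, vecD (vecD Ψ) x = (V0 x).mulVec (Ψ x) - E • Ψ x := by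
    intro x hx
    rw [← hΨeq x hx]; abel
  have dΦ : ∀ x ∈ Set.Ioo a b,
      HV Φ ((G x).mulVec (Ψ x) - E • Ψ x - (F1 x).mulVec (Φ x)) x := by
    intro x hx
    have h := (dP2 x hx).sub ((dF x hx).mulVec (dP x hx))
    rw [← eΦ] at h
    convert h using 1
    rw [eP x hx, hΦ x]
    simp only [Matrix.sub_mulVec, Matrix.mulVec_sub, Matrix.mulVec_mulVec]
    abel
  intro x hx
  have h := (((dG x hx).mulVec (dP x hx)).sub ((dP x hx).smul E)).sub
    ((dF x hx).mulVec (dΦ x hx))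
  have h2 := (h.congr (W := vecD Φ) (Filter.mem_of_superset (nb x hx)
    fun t ht => (dΦ t ht).vecD_eq)).vecD_eq
  have eP1 : vecD Ψ x = Φ x + (F1 x).mulVec (Ψ x) := by rw [hΦ x]; abel
  rw [h2, hV1 x, (dF x hx).matD_eq, eP1]
  simp only [Matrix.sub_mulVec, Matrix.mulVec_sub, Matrix.mulVec_add, Matrix.mulVec_mulVec,
    Matrix.mulVec_smul, Matrix.smul_mulVec, two_smul, smul_add, Matrix.add_mulVec]
  abel

end SingularDarboux
end
end
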